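/- Let m ≥ 3 and let A ≥ 0, B be integers with 16A + 8B - B² ≥ 0 such that it is NOT the case that (A ≡ 1 mod 2 and B ≡ 4 mod 8) and NOT the case that (A ≡ 0 mod 2 and B ≡ 0 mod 8). Then there exist integers x₁, x₂, x₃, x₄ with P_m(x₁) + P_m(x₂) + 2P_m(x₃) + 4P_m(x₄) = A(m-2) + B. -/

import Mathlib

/-- The generalized `m`-gonal number `P_m(x) = ((m-2)x² - (m-4)x)/2`. -/
def polygonal (m x : ℤ) : ℤ := ((m - 2) * x ^ 2 - (m - 4) * x) / 2

/-!
With `q = x₁² + x₂² + 2x₃² + 4x₄²` and `s = x₁ + x₂ + 2x₃ + 4x₄`, the sum of polygonal numbers is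
`((m - 2) * q - (m - 4) * s) / 2`, so it suffices to solve `q = 2 * A + B`, `s = B`. Diagonalizing,
this means writing `16 * A + 8 * B - B ^ 2` as `c ^ 2 + 2 * b ^ 2 + 4 * a ^ 2` with congruences
between `a, b, c` and `B`, which can be arranged by choosing signs. After removing a power of `4`
the number to be represented is odd, and a positive odd `n` has this shape because `2 * n` is a sum
of three squares. The latter is the case `2 mod 4` of Gauss's theorem: Dirichlet's theorem and
quadratic reciprocity produce a positive definite integral ternary form of determinant `1`
representing the number, and by Hermite's bound every such form is equivalent to a sum of three
squares.
-/

section ScaledSchur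

open Matrix

variable {R : Type*} [CommRing R] {n : ℕ}

lemma det_eq_mul_det_submatrix_succ {A : Matrix (Fin (n + 1)) (Fin (n + 1)) R}
    (hA : ∀ i : Fin n, A i.succ 0 = 0) :
    A.det = A 0 0 * (A.submatrix Fin.succ Fin.succ).det := by
  simp [det_succ_column_zero, Fin.sum_univ_succ, hA]

lemma exists_specialLinearGroup_col_zero_eq_vecCons
    (Q : SpecialLinearGroup (Fin (n + 1)) R) (t : R) :
    ∃ P : SpecialLinearGroup (Fin (n + 2)) R, P.1ᵀ 0 = vecCons t (Q.1ᵀ 0) := by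
  let S : Matrix (Fin (n + 2)) (Fin (n + 2)) R :=
    .of (Fin.cons (Fin.cons (-1) (Pi.single 0 t)) fun i ↦ Fin.cons 0 (Q.1 i))
  have hS : S.det = -1 := by
    have hminor : S.submatrix Fin.succ Fin.succ = Q.1 := rfl
    rw [det_eq_mul_det_submatrix_succ (fun _ ↦ rfl), hminor]
    simp [S]
  refine ⟨⟨S.submatrix id (Equiv.swap 0 1), by simp [det_permute', hS]⟩, ?_⟩
  ext i
  cases i using Fin.cases <;> rfl

/-- The Schur complement of the top left entry of `M`, multiplied by that entry so that its
coefficients stay in the ring. For symmetric `M` it is the Gram matrix of the form left in the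
last `n` variables after completing the square in the first one. -/
def scaledSchur (M : Matrix (Fin (n + 1)) (Fin (n + 1)) R) : Matrix (Fin n) (Fin n) R :=
  .of fun i j ↦ M 0 0 * M i.succ j.succ - M i.succ 0 * M 0 j.succ

lemma mul_det_scaledSchur (M : Matrix (Fin (n + 1)) (Fin (n + 1)) R) :
    M 0 0 * (scaledSchur M).det = M 0 0 ^ n * M.det := by
  -- Column operations: multiplying by `E` clears the first row of `M` beyond its first entry.
  let E : Matrix (Fin (n + 1)) (Fin (n + 1)) R :=
    .of (Fin.cons (Fin.cons 1 fun j ↦ -M 0 j.succ)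
      fun i ↦ Fin.cons 0 ((M 0 0 • 1 : Matrix (Fin n) (Fin n) R) i))
  have hE : E.det = M 0 0 ^ n := by
    have hminor : E.submatrix Fin.succ Fin.succ = M 0 0 • 1 := rfl
    rw [det_eq_mul_det_submatrix_succ (fun _ ↦ rfl), hminor]
    simp [E]
  have hME : (M * E)ᵀ.det = M 0 0 * (scaledSchur M).det := by
    have hminor : (M * E)ᵀ.submatrix Fin.succ Fin.succ = (scaledSchur M)ᵀ := by
      ext i j
      suffices -(M 0 i.succ * M j.succ 0) + M 0 0 * M j.succ i.succ =
          M 0 0 * M j.succ i.succ - M j.succ 0 * M 0 i.succ by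
        simpa [E, scaledSchur, mul_apply, Fin.sum_univ_succ, one_apply, mul_comm]
      ring
    rw [det_eq_mul_det_submatrix_succ, hminor, det_transpose]
    · simp [E, mul_apply, Fin.sum_univ_succ]
    · intro j
      simp [E, mul_apply, Fin.sum_univ_succ, one_apply, mul_comm]
  rw [← hME, det_transpose, det_mul, hE, mul_comm]

lemma mul_dotProduct_mulVec_vecCons {M : Matrix (Fin (n + 1)) (Fin (n + 1)) R}
    (hM : M.IsSymm) (t : R) (y : Fin n → R) :
    M 0 0 * (vecCons t y ⬝ᵥ M *ᵥ vecCons t y) =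
      (M 0 0 * t + (fun j ↦ M 0 j.succ) ⬝ᵥ y) ^ 2 + y ⬝ᵥ scaledSchur M *ᵥ y := by
  set w : Fin n → R := fun j ↦ M 0 j.succ with hw
  set N := M.submatrix Fin.succ Fin.succ with hN
  have hsymm (i : Fin n) : M i.succ 0 = w i := hM.apply _ _
  have hmulVec : M *ᵥ vecCons t y = vecCons (M 0 0 * t + w ⬝ᵥ y) (t • w + N *ᵥ y) := by
    ext i
    cases i using Fin.cases <;>
      simp [mulVec, dotProduct, Fin.sum_univ_succ, hsymm, hw, hN, mul_comm]
  have hschur : scaledSchur M = M 0 0 • N - vecMulVec w w := by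
    ext i j
    simp [scaledSchur, vecMulVec, hsymm, hw, hN]
  rw [hmulVec, hschur, cons_dotProduct_cons, sub_mulVec, smul_mulVec, vecMulVec_mulVec]
  simp only [dotProduct_add, dotProduct_sub, dotProduct_smul, dotProduct_comm y w, smul_eq_mul,
    op_smul_eq_smul]
  ring

end ScaledSchur

section PosDef

open Matrix

variable {n : ℕ}

lemma posDef_transpose_mul_mul {R : Type*} [CommRing R] [PartialOrder R] [StarRing R]
    [TrivialStar R] {M : Matrix (Fin n) (Fin n) R} (hM : M.PosDef)
    (P : SpecialLinearGroup (Fin n) R) : (P.1ᵀ * M * P.1).PosDef := by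
  rw [← conjTranspose_eq_transpose_of_trivial]
  exact hM.conjTranspose_mul_mul_same <|
    mulVec_injective_of_isUnit <| (isUnit_iff_isUnit_det _).mpr (by simp)

variable {R : Type*} [CommRing R] [LinearOrder R] [IsStrictOrderedRing R] [StarRing R]
  [TrivialStar R]

lemma posDef_scaledSchur {M : Matrix (Fin (n + 1)) (Fin (n + 1)) R} (hM : M.PosDef) :
    (scaledSchur M).PosDef := by
  have hsymm := isHermitian_iff_isSymm.mp hM.isHermitian
  refine .of_dotProduct_mulVec_pos (isHermitian_iff_isSymm.mpr <| .ext fun i j ↦ ?_) fun y hy ↦ ?_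
  · simp [scaledSchur, hsymm.apply, mul_comm]
  · have ha : 0 < M 0 0 := hM.diag_pos
    -- The first entry is chosen so that the completed square vanishes.
    let x := vecCons (-((fun j ↦ M 0 j.succ) ⬝ᵥ y)) (M 0 0 • y)
    have hx : x ≠ 0 := by simp [x, ha.ne', hy]
    have hpos : 0 < M 0 0 * (x ⬝ᵥ M *ᵥ x) := by
      simpa using mul_pos ha (hM.dotProduct_mulVec_pos hx)
    rw [mul_dotProduct_mulVec_vecCons hsymm] at hpos
    simpa [mulVec_smul, ha] using hpos

lemma posDef_of_posDef_scaledSchur {M : Matrix (Fin (n + 1)) (Fin (n + 1)) R} (hsymm : M.IsSymm)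
    (ha : 0 < M 0 0) (hM : (scaledSchur M).PosDef) : M.PosDef := by
  refine .of_dotProduct_mulVec_pos (isHermitian_iff_isSymm.mpr hsymm) fun x hx ↦
    pos_of_mul_pos_right ?_ ha.le
  rw [star_trivial, ← cons_head_tail x, mul_dotProduct_mulVec_vecCons hsymm]
  obtain htail | htail := eq_or_ne (vecTail x) 0
  · have hhead : vecHead x ≠ 0 := fun h ↦ hx (by rw [← cons_head_tail x, h, htail]; simp)
    simp only [htail, mulVec_zero, dotProduct_zero, add_zero]
    positivity
  · have hpos : 0 < vecTail x ⬝ᵥ scaledSchur M *ᵥ vecTail x := by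
      simpa using hM.dotProduct_mulVec_pos htail
    positivity

lemma posDef_fin_three_of_minors_pos {M : Matrix (Fin 3) (Fin 3) R} (hM : M.IsSymm) (h₁ : 0 < M 0 0)
    (h₂ : 0 < M 0 0 * M 1 1 - M 0 1 ^ 2) (h₃ : 0 < M.det) : M.PosDef := by
  have hschur (N : Matrix (Fin 3) (Fin 3) R) :
      scaledSchur (scaledSchur N) 0 0 = N 0 0 * N.det := by
    simp only [scaledSchur, of_apply, Fin.succ_zero_eq_one, Fin.succ_one_eq_two, det_fin_three]
    ring
  have hsymm {m : ℕ} {N : Matrix (Fin (m + 1)) (Fin (m + 1)) R} (hN : N.IsSymm) :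
      (scaledSchur N).IsSymm := .ext fun i j ↦ by simp [scaledSchur, hN.apply, mul_comm]
  refine posDef_of_posDef_scaledSchur hM h₁ <| posDef_of_posDef_scaledSchur (hsymm hM) ?_ <|
    posDef_of_posDef_scaledSchur (hsymm (hsymm hM)) ?_ <|
    .of_dotProduct_mulVec_pos (Subsingleton.elim _ _) fun x hx ↦ (hx (Subsingleton.elim x 0)).elim
  · simpa [scaledSchur, hM.apply 0 1, sq] using h₂
  · rw [hschur]
    positivity

end PosDef

section Hermite

open Matrix

variable {n : ℕ}

lemma exists_four_mul_mul_add_sq_le {a : ℤ} (ha : 0 < a) (d : ℤ) :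
    ∃ t : ℤ, 4 * (a * t + d) ^ 2 ≤ a ^ 2 := by
  refine ⟨-((2 * d + a) / (2 * a)), ?_⟩
  have hmod := Int.emod_add_mul_ediv (2 * d + a) (2 * a)
  have hnonneg := Int.emod_nonneg (2 * d + a) (show 2 * a ≠ 0 by lia)
  have hlt := Int.emod_lt_of_pos (2 * d + a) (show 0 < 2 * a by lia)
  rw [show 4 * (a * -((2 * d + a) / (2 * a)) + d) ^ 2 = ((2 * d + a) % (2 * a) - a) ^ 2 by grind]
  exact sq_le_sq' (by lia) (by lia)

lemma exists_minimal_transpose_mul_mul_zero_zero {M : Matrix (Fin (n + 1)) (Fin (n + 1)) ℤ}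
    (hM : M.PosDef) :
    ∃ P : SpecialLinearGroup (Fin (n + 1)) ℤ, ∀ Q : SpecialLinearGroup (Fin (n + 1)) ℤ,
      (P.1ᵀ * M * P.1) 0 0 ≤ (Q.1ᵀ * M * Q.1) 0 0 := by
  let f (P : SpecialLinearGroup (Fin (n + 1)) ℤ) : ℕ := ((P.1ᵀ * M * P.1) 0 0).toNat
  refine ⟨Function.argmin f, fun Q ↦ ?_⟩
  have hpos : 0 < (Q.1ᵀ * M * Q.1) 0 0 := (posDef_transpose_mul_mul hM Q).diag_pos
  have hle : f (Function.argmin f) ≤ f Q := Function.argmin_le f Q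
  simp only [f] at hle ⊢
  lia

lemma three_mul_sq_le_four_mul_scaledSchur {M : Matrix (Fin (n + 2)) (Fin (n + 2)) ℤ}
    (hM : M.PosDef)
    (hmin : ∀ P : SpecialLinearGroup (Fin (n + 2)) ℤ, M 0 0 ≤ (P.1ᵀ * M * P.1) 0 0)
    (Q : SpecialLinearGroup (Fin (n + 1)) ℤ) :
    3 * M 0 0 ^ 2 ≤ 4 * (Q.1ᵀ * scaledSchur M * Q.1) 0 0 := by
  have ha : 0 < M 0 0 := hM.diag_pos
  obtain ⟨t, ht⟩ := exists_four_mul_mul_add_sq_le ha ((fun j ↦ M 0 j.succ) ⬝ᵥ Q.1ᵀ 0)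
  obtain ⟨P, hP⟩ := exists_specialLinearGroup_col_zero_eq_vecCons Q t
  have hle := mul_le_mul_of_nonneg_left (hmin P) ha.le
  rw [mul_mul_apply, hP, mul_dotProduct_mulVec_vecCons (isHermitian_iff_isSymm.mp hM.isHermitian),
    ← mul_mul_apply] at hle
  linarith

/-- Hermite's bound `min ≤ (4 / 3) ^ (n / 2) * det ^ (1 / (n + 1))` on the minimum of a positive
definite form in `n + 1` variables, raised to the power `n + 1` and cleared of denominators. -/
theorem exists_pow_zero_zero_le_det (n : ℕ) {M : Matrix (Fin (n + 1)) (Fin (n + 1)) ℤ}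
    (hM : M.PosDef) :
    ∃ P : SpecialLinearGroup (Fin (n + 1)) ℤ,
      3 ^ (n + 1).choose 2 * (P.1ᵀ * M * P.1) 0 0 ^ (n + 1) ≤ 4 ^ (n + 1).choose 2 * M.det := by
  induction n with
  | zero => exact ⟨1, by simp⟩
  | succ n ih =>
    obtain ⟨P, hP⟩ := exists_minimal_transpose_mul_mul_zero_zero hM
    refine ⟨P, ?_⟩
    set N := P.1ᵀ * M * P.1 with hN
    have hNpos : N.PosDef := posDef_transpose_mul_mul hM P
    have hdet : M.det = N.det := by simp [hN]
    have ha : 0 < N 0 0 := hNpos.diag_pos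
    have hschur : (scaledSchur N).det = N 0 0 ^ n * N.det :=
      mul_left_cancel₀ ha.ne' (by rw [mul_det_scaledSchur, pow_succ', mul_assoc])
    have hchoose : (n + 2).choose 2 = (n + 1) + (n + 1).choose 2 := by
      rw [Nat.choose_succ_succ', Nat.choose_one_right]
    obtain ⟨Q, hQ⟩ := ih (posDef_scaledSchur hNpos)
    set G := (Q.1ᵀ * scaledSchur N * Q.1) 0 0
    have hG : 3 * N 0 0 ^ 2 ≤ 4 * G :=
      three_mul_sq_le_four_mul_scaledSchur hNpos
        (fun R ↦ (hP (P * R)).trans_eq (by simp [N, Matrix.mul_assoc])) Q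
    rw [hdet, hchoose]
    set k := (n + 1).choose 2
    refine le_of_mul_le_mul_left ?_ (pow_pos ha n)
    calc N 0 0 ^ n * (3 ^ (n + 1 + k) * N 0 0 ^ (n + 2))
        = 3 ^ k * (3 * N 0 0 ^ 2) ^ (n + 1) := by ring
      _ ≤ 3 ^ k * (4 * G) ^ (n + 1) := by gcongr
      _ = 4 ^ (n + 1) * (3 ^ k * G ^ (n + 1)) := by ring
      _ ≤ 4 ^ (n + 1) * (4 ^ k * (scaledSchur N).det) := by gcongr
      _ = N 0 0 ^ n * (4 ^ (n + 1 + k) * N.det) := by rw [hschur]; ring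

lemma exists_zero_zero_eq_one (hn : n < 5) {M : Matrix (Fin (n + 1)) (Fin (n + 1)) ℤ}
    (hM : M.PosDef) (hdet : M.det = 1) :
    ∃ P : SpecialLinearGroup (Fin (n + 1)) ℤ, (P.1ᵀ * M * P.1) 0 0 = 1 := by
  obtain ⟨P, hP⟩ := exists_pow_zero_zero_le_det n hM
  refine ⟨P, le_antisymm ?_ (posDef_transpose_mul_mul hM P).diag_pos⟩
  by_contra! ha
  have hlt : (4 : ℤ) ^ (n + 1).choose 2 < 3 ^ (n + 1).choose 2 * 2 ^ (n + 1) := by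
    interval_cases n <;> norm_num [Nat.choose]
  refine hlt.not_ge ?_
  calc (3 : ℤ) ^ (n + 1).choose 2 * 2 ^ (n + 1)
      ≤ 3 ^ (n + 1).choose 2 * (P.1ᵀ * M * P.1) 0 0 ^ (n + 1) := by gcongr; exact ha
    _ ≤ 4 ^ (n + 1).choose 2 := by simpa [hdet] using hP

lemma exists_eq_transpose_mul_self_of_zero_zero_eq_one
    {M : Matrix (Fin (n + 1)) (Fin (n + 1)) ℤ} (hM : M.IsSymm) (h00 : M 0 0 = 1)
    {Q : Matrix (Fin n) (Fin n) ℤ} (hQ : scaledSchur M = Qᵀ * Q) :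
    ∃ S : Matrix (Fin (n + 1)) (Fin (n + 1)) ℤ, M = Sᵀ * S := by
  refine ⟨.of (Fin.cons (M 0) fun i ↦ Fin.cons 0 (Q i)), ?_⟩
  have hminor (i j : Fin n) : M i.succ j.succ - M 0 i.succ * M 0 j.succ = ∑ k, Q k i * Q k j := by
    simpa [scaledSchur, h00, hM.apply, mul_apply] using congr_fun₂ hQ i j
  ext i j
  cases i using Fin.cases <;> cases j using Fin.cases <;>
    simp [mul_apply, Fin.sum_univ_succ, h00, hM.apply, ← hminor]

theorem exists_eq_transpose_mul_self_of_posDef (hn : n ≤ 5) {M : Matrix (Fin n) (Fin n) ℤ}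
    (hM : M.PosDef) (hdet : M.det = 1) : ∃ Q : Matrix (Fin n) (Fin n) ℤ, M = Qᵀ * Q := by
  induction n with
  | zero => exact ⟨1, Subsingleton.elim _ _⟩
  | succ n ih =>
    obtain ⟨P, hP⟩ := exists_zero_zero_eq_one (by lia) hM hdet
    set N := P.1ᵀ * M * P.1 with hN
    have hNpos : N.PosDef := posDef_transpose_mul_mul hM P
    have hNdet : (scaledSchur N).det = 1 := by
      have hNdet : N.det = 1 := by simp [hN, hdet]
      simpa only [hP, hNdet, one_mul, one_pow] using mul_det_scaledSchur N
    obtain ⟨Q, hQ⟩ := ih (by lia) (posDef_scaledSchur hNpos) hNdet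
    obtain ⟨S, hS⟩ := exists_eq_transpose_mul_self_of_zero_zero_eq_one
      (isHermitian_iff_isSymm.mp hNpos.isHermitian) hP hQ
    have hinv : P.1 * (P⁻¹).1 = 1 := congr_arg Subtype.val (mul_inv_cancel P)
    refine ⟨S * (P⁻¹).1, ?_⟩
    calc M = (P.1 * (P⁻¹).1)ᵀ * M * (P.1 * (P⁻¹).1) := by
          rw [hinv, transpose_one, Matrix.one_mul, Matrix.mul_one]
      _ = (P⁻¹).1ᵀ * N * (P⁻¹).1 := by simp only [hN, transpose_mul, Matrix.mul_assoc]
      _ = (S * (P⁻¹).1)ᵀ * (S * (P⁻¹).1) := by simp only [hS, transpose_mul, Matrix.mul_assoc]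

end Hermite

lemma exists_eq_sum_three_sq_of_dvd {n b d : ℤ} (hn : 1 < n) (hb : 0 < b)
    (h : b * n - 1 ∣ d ^ 2 + b) : ∃ x y z, n = x ^ 2 + y ^ 2 + z ^ 2 := by
  obtain ⟨a, ha⟩ := h
  have hbn : 0 < b * n - 1 := by nlinarith
  have hapos : 0 < a := pos_of_mul_pos_right (ha ▸ by positivity) hbn.le
  let M : Matrix (Fin 3) (Fin 3) ℤ := !![a, d, 1; d, b * n - 1, 0; 1, 0, n]
  have hdet : M.det = 1 := by
    simp only [M, Matrix.det_fin_three, Matrix.of_apply, Matrix.cons_val]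
    linear_combination (-n) * ha
  have hpos : M.PosDef := by
    have hsymm : M.IsSymm := by ext i j; fin_cases i <;> fin_cases j <;> rfl
    refine posDef_fin_three_of_minors_pos hsymm hapos ?_ (hdet ▸ one_pos)
    change 0 < a * (b * n - 1) - d ^ 2
    linarith
  obtain ⟨Q, hQ⟩ := exists_eq_transpose_mul_self_of_posDef (by simp) hpos hdet
  refine ⟨Q 0 2, Q 1 2, Q 2 2, ?_⟩
  simpa [M, Matrix.mul_apply, Fin.sum_univ_three, ← sq] using congr_fun₂ hQ 2 2


section ThreeSquares

lemma exists_prime_add_one_eq_mul {n : ℕ} (hn : n % 4 = 2) :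
    ∃ p b : ℕ, p.Prime ∧ p + 1 = b * n ∧ p % 4 = 1 ∧ b % 4 = 1 := by
  have hcoprime : IsCoprime (n - 1 : ℤ) (4 * n : ℕ) := by
    obtain ⟨k, rfl⟩ : ∃ k, n = 4 * k + 2 := ⟨n / 4, by lia⟩
    exact ⟨1 + 4 * k, -k, by push_cast; ring⟩
  obtain ⟨p, hpn, hp, hmod⟩ := Nat.forall_exists_prime_gt_and_zmodEq n (by lia) hcoprime
  obtain ⟨k, hk⟩ := hmod.symm.dvd
  have hk0 : 0 ≤ k := by
    by_contra! hneg
    have : (4 * n : ℕ) * k ≤ 0 := by nlinarith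
    lia
  lift k to ℕ using hk0
  have hpn : p + 1 = (4 * k + 1) * n := by
    zify
    push_cast at hk
    linear_combination hk
  have hp4 : p % 4 = 1 := by
    have : p + 1 = 4 * (k * n) + n := by rw [hpn]; ring
    lia
  exact ⟨p, 4 * k + 1, hp, hpn, hp4, by lia⟩

open NumberTheorySymbols in
lemma isSquare_neg_natCast_zmod {p b : ℕ} [Fact p.Prime] (hp : p % 4 = 1) (hb : b % 4 = 1)
    (hdvd : b ∣ p + 1) : IsSquare (-b : ZMod p) := by
  have hp_odd : Odd p := Nat.odd_iff.mpr (by lia)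
  have hb_odd : Odd b := Nat.odd_iff.mpr (by lia)
  have hmod : (p : ℤ) % b = -1 % b :=
    (Int.modEq_iff_dvd.mpr (by rw [sub_neg_eq_add]; exact_mod_cast hdvd) : -1 ≡ p [ZMOD b]).symm
  have hJ : J(-b | p) = 1 := by
    calc J(-b | p) = J(b | p) := by
          rw [jacobiSym.neg _ hp_odd, ZMod.χ₄_nat_one_mod_four hp, one_mul]
      _ = J(p | b) := jacobiSym.quadratic_reciprocity_one_mod_four hb hp_odd
      _ = J(-1 | b) := jacobiSym.mod_left' hmod
      _ = 1 := by rw [jacobiSym.at_neg_one hb_odd, ZMod.χ₄_nat_one_mod_four hb]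
  simpa using ZMod.isSquare_of_jacobiSym_eq_one hJ

theorem exists_eq_sum_three_sq_of_emod_four_eq_two {n : ℤ} (hn : 0 < n) (hmod : n % 4 = 2) :
    ∃ x y z, n = x ^ 2 + y ^ 2 + z ^ 2 := by
  lift n to ℕ using hn.le
  obtain ⟨p, b, hp, hpn, hp4, hb4⟩ := exists_prime_add_one_eq_mul (n := n) (by lia)
  have : Fact p.Prime := ⟨hp⟩
  obtain ⟨r, hr⟩ := isSquare_neg_natCast_zmod hp4 hb4 (Dvd.intro n hpn.symm)
  obtain ⟨d, rfl⟩ := ZMod.intCast_surjective r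
  refine exists_eq_sum_three_sq_of_dvd (b := b) (d := d) (by lia) (by lia) ?_
  have hp_eq : (b * n - 1 : ℤ) = p := by
    zify at hpn
    linear_combination -hpn
  rw [hp_eq, ← ZMod.intCast_zmod_eq_zero_iff_dvd]
  push_cast
  linear_combination -hr

lemma exists_eq_sq_add_two_mul_sq_add_four_mul_sq_of_two_mul_eq {n x y z : ℤ} (hn : Odd n)
    (h : 2 * n = x ^ 2 + y ^ 2 + z ^ 2) (hxy : Even (x - y)) (hz : Even z) :
    ∃ a b c : ℤ, n = c ^ 2 + 2 * b ^ 2 + 4 * a ^ 2 := by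
  obtain ⟨s, hs⟩ := hxy
  obtain ⟨b, rfl⟩ := hz
  obtain rfl : x = y + 2 * s := by lia
  have hsum : n = (y + s) ^ 2 + 2 * b ^ 2 + s ^ 2 := by linarith
  obtain ⟨a, rfl⟩ | hs := Int.even_or_odd s
  · exact ⟨a, b, y + (a + a), by rw [hsum]; ring⟩
  · have heven : Even (y + s) := by
      rw [← Int.even_pow' two_ne_zero, show (y + s) ^ 2 = n - s ^ 2 - 2 * b ^ 2 by linarith]
      exact (hn.sub_odd hs.pow).sub (even_two_mul _)
    obtain ⟨a, ha⟩ := heven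
    exact ⟨a, b, s, by rw [hsum, ha]; ring⟩

lemma even_and_four_dvd_sq_or_odd_and_eight_dvd_sq_sub_one (x : ℤ) :
    Even x ∧ 4 ∣ x ^ 2 ∨ Odd x ∧ 8 ∣ x ^ 2 - 1 :=
  (Int.even_or_odd x).imp (fun h ↦ ⟨h, pow_dvd_pow_of_dvd h.two_dvd 2⟩)
    fun h ↦ ⟨h, Int.eight_dvd_sq_sub_one_of_odd h⟩

theorem exists_eq_sq_add_two_mul_sq_add_four_mul_sq_of_odd {n : ℤ} (hn : 0 < n) (hodd : Odd n) :
    ∃ a b c : ℤ, n = c ^ 2 + 2 * b ^ 2 + 4 * a ^ 2 := by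
  obtain ⟨x, y, z, h⟩ := exists_eq_sum_three_sq_of_emod_four_eq_two (n := 2 * n) (by lia) (by grind)
  have hparity : (Even (x - y) ∧ Even z) ∨ (Even (x - z) ∧ Even y) ∨ (Even (y - z) ∧ Even x) := by
    have := even_and_four_dvd_sq_or_odd_and_eight_dvd_sq_sub_one x
    have := even_and_four_dvd_sq_or_odd_and_eight_dvd_sq_sub_one y
    have := even_and_four_dvd_sq_or_odd_and_eight_dvd_sq_sub_one z
    grind
  obtain ⟨hxy, hz⟩ | ⟨hxz, hy⟩ | ⟨hyz, hx⟩ := hparity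
  · exact exists_eq_sq_add_two_mul_sq_add_four_mul_sq_of_two_mul_eq hodd h hxy hz
  · exact exists_eq_sq_add_two_mul_sq_add_four_mul_sq_of_two_mul_eq hodd (by rw [h]; ring) hxz hy
  · exact exists_eq_sq_add_two_mul_sq_add_four_mul_sq_of_two_mul_eq hodd (by rw [h]; ring) hyz hx

end ThreeSquares

section JointRepresentation

/-- The quadratic form `x₁² + x₂² + 2x₃² + 4x₄²` takes the value `q` and the linear form
`x₁ + x₂ + 2x₃ + 4x₄` takes the value `s` at a common integer point. Sums of generalized polygonal
numbers with weights `1, 1, 2, 4` are linear in this pair of values. -/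
def JointlyRepresented (q s : ℤ) : Prop :=
  ∃ x₁ x₂ x₃ x₄ : ℤ, x₁ ^ 2 + x₂ ^ 2 + 2 * x₃ ^ 2 + 4 * x₄ ^ 2 = q ∧
    x₁ + x₂ + 2 * x₃ + 4 * x₄ = s

/-- The linear forms `s`, `c = x₁ + x₂ + 2x₃ - 4x₄`, `b = x₁ + x₂ - 2x₃` and `a = x₁ - x₂`
diagonalize the quadratic form; the divisibilities say that the `xᵢ` they determine are integers. -/
lemma jointlyRepresented_of_eq {q s a b c : ℤ} (h : 8 * q - s ^ 2 = c ^ 2 + 2 * b ^ 2 + 4 * a ^ 2)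
    (h₄ : 8 ∣ s - c) (h₃ : 8 ∣ s + c - 2 * b) (h₂ : 8 ∣ s + c + 2 * b - 4 * a) :
    JointlyRepresented q s := by
  obtain ⟨x₄, h₄⟩ := h₄
  obtain ⟨x₃, h₃⟩ := h₃
  obtain ⟨x₂, h₂⟩ := h₂
  obtain rfl : s = x₂ + a + x₂ + 2 * x₃ + 4 * x₄ := by lia
  obtain rfl : c = x₂ + a + x₂ + 2 * x₃ - 4 * x₄ := by lia
  obtain rfl : b = x₂ + a + x₂ - 2 * x₃ := by lia
  exact ⟨x₂ + a, x₂, x₃, x₄, by linarith, rfl⟩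

lemma exists_sq_eq_sq_and_dvd_sub {k x y : ℤ} (h : k ∣ y - x ∨ k ∣ y + x) :
    ∃ z, z ^ 2 = x ^ 2 ∧ k ∣ y - z := by
  obtain h | h := h
  · exact ⟨x, rfl, h⟩
  · exact ⟨-x, neg_sq x, by rwa [sub_neg_eq_add]⟩

lemma four_dvd_sub_or_four_dvd_add {x y : ℤ} (hx : Odd x) (hy : Odd y) :
    4 ∣ x - y ∨ 4 ∣ x + y := by
  grind

lemma eight_dvd_sub_or_eight_dvd_add {x y : ℤ} (hx : Odd x) (hy : Odd y)
    (h : 16 ∣ x ^ 2 - y ^ 2) : 8 ∣ x - y ∨ 8 ∣ x + y := by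
  obtain ⟨s, hs⟩ := hx.sub_odd hy
  obtain ⟨t, ht⟩ := hx.add_odd hy
  have hst : 4 ∣ s * t := by
    obtain ⟨k, hk⟩ := h
    have : 4 * (s * t) = 4 * (4 * k) := by
      linear_combination hk - (x + y) * hs - 2 * s * ht
    exact ⟨k, by lia⟩
  have hcoprime {u : ℤ} (hu : Odd u) : IsCoprime 4 u :=
    (Int.isCoprime_two_left.mpr hu).pow_left (m := 2)
  obtain hs_odd | ht_odd : Odd s ∨ Odd t := by grind
  · have ht4 : 4 ∣ t := (hcoprime hs_odd).dvd_of_dvd_mul_left hst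
    exact .inr (by lia)
  · have hs4 : 4 ∣ s := (hcoprime ht_odd).dvd_of_dvd_mul_right hst
    exact .inl (by lia)

lemma jointlyRepresented_of_odd {A B : ℤ} (hd : 0 ≤ 16 * A + 8 * B - B ^ 2) (hB : Odd B) :
    JointlyRepresented (2 * A + B) B := by
  have hB8 := Int.eight_dvd_sq_sub_one_of_odd hB
  obtain ⟨a, b, c, h⟩ := exists_eq_sq_add_two_mul_sq_add_four_mul_sq_of_odd
    (n := 16 * A + 8 * B - B ^ 2) (by lia) (by grind)
  obtain ⟨ha, hb, hc, hBc⟩ : Odd a ∧ Odd b ∧ Odd c ∧ 16 ∣ B ^ 2 - c ^ 2 := by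
    have := even_and_four_dvd_sq_or_odd_and_eight_dvd_sq_sub_one a
    have := even_and_four_dvd_sq_or_odd_and_eight_dvd_sq_sub_one b
    have := even_and_four_dvd_sq_or_odd_and_eight_dvd_sq_sub_one c
    grind
  obtain ⟨c', hc', hBc'⟩ := exists_sq_eq_sq_and_dvd_sub (eight_dvd_sub_or_eight_dvd_add hB hc hBc)
  obtain ⟨b', hb', hBb'⟩ := exists_sq_eq_sq_and_dvd_sub (four_dvd_sub_or_four_dvd_add hB hb)
  exact jointlyRepresented_of_eq (a := a) (b := b') (c := c') (by rw [hb', hc', ← h]; ring)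
    hBc' (by lia) (by grind)

lemma jointlyRepresented_two_mul_of_odd {A C : ℤ} (hd : 0 ≤ 4 * A + 4 * C - C ^ 2) (hC : Odd C) :
    JointlyRepresented (2 * A + 2 * C) (2 * C) := by
  have hC8 := Int.eight_dvd_sq_sub_one_of_odd hC
  obtain ⟨a, b, c, h⟩ := exists_eq_sq_add_two_mul_sq_add_four_mul_sq_of_odd
    (n := 4 * A + 4 * C - C ^ 2) (by lia) (by grind)
  obtain ⟨hb, hc⟩ : Odd b ∧ Odd c := by
    have := even_and_four_dvd_sq_or_odd_and_eight_dvd_sq_sub_one b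
    have := even_and_four_dvd_sq_or_odd_and_eight_dvd_sq_sub_one c
    grind
  obtain ⟨c', hc', hCc'⟩ := exists_sq_eq_sq_and_dvd_sub (four_dvd_sub_or_four_dvd_add hC hc)
  exact jointlyRepresented_of_eq (a := 2 * a) (b := 2 * b) (c := 2 * c')
    (by linear_combination 4 * h - 4 * hc') (by lia) (by grind) (by grind)

lemma jointlyRepresented_four_mul_of_odd_sub {A C : ℤ} (hd : 0 ≤ A + 2 * C - C ^ 2)
    (hAC : Odd (A - C)) : JointlyRepresented (2 * A + 4 * C) (4 * C) := by
  have hodd : Odd (A + 2 * C - C ^ 2) := by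
    obtain ⟨k, hk⟩ := Int.even_mul_pred_self C
    obtain ⟨l, hl⟩ := hAC
    exact ⟨l + C - k, by linear_combination hl - hk⟩
  obtain ⟨a, b, c, h⟩ := exists_eq_sq_add_two_mul_sq_add_four_mul_sq_of_odd (by grind) hodd
  have hc : Odd c := by
    rw [h] at hodd
    have := even_and_four_dvd_sq_or_odd_and_eight_dvd_sq_sub_one c
    grind
  obtain hC | hC := Int.even_or_odd C
  · -- The sum `4 * C` is divisible by `8`, so `4 * c` with `c` odd is not congruent to it:
    -- use `16 * (c ^ 2 + 4 * a ^ 2) = (8 * a) ^ 2 + 4 * (2 * c) ^ 2` to exchange it with `a`.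
    exact jointlyRepresented_of_eq (a := 2 * c) (b := 4 * b) (c := 8 * a)
      (by linear_combination 16 * h) (by grind) (by grind) (by grind)
  · exact jointlyRepresented_of_eq (a := 4 * a) (b := 4 * b) (c := 4 * c)
      (by linear_combination 16 * h) (by grind) (by grind) (by grind)

end JointRepresentation

lemma two_mul_polygonal (m x : ℤ) : 2 * polygonal m x = (m - 2) * (x ^ 2 - x) + 2 * x := by
  have hdvd : 2 ∣ (m - 2) * x ^ 2 - (m - 4) * x := by
    obtain ⟨k, hk⟩ := Int.even_mul_pred_self x
    exact ⟨(m - 2) * k + x, by linear_combination (m - 2) * hk⟩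
  rw [polygonal, Int.mul_ediv_cancel' hdvd]
  ring

lemma JointlyRepresented.exists_polygonal {A B : ℤ} (h : JointlyRepresented (2 * A + B) B) :
    ∃ x₁ x₂ x₃ x₄ : ℤ, ∀ m : ℤ,
      polygonal m x₁ + polygonal m x₂ + 2 * polygonal m x₃ + 4 * polygonal m x₄ =
        A * (m - 2) + B := by
  obtain ⟨x₁, x₂, x₃, x₄, hq, hs⟩ := h
  refine ⟨x₁, x₂, x₃, x₄, fun m ↦ mul_left_cancel₀ two_ne_zero ?_⟩
  linear_combination two_mul_polygonal m x₁ + two_mul_polygonal m x₂ + 2 * two_mul_polygonal m x₃ +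
    4 * two_mul_polygonal m x₄ + (m - 2) * hq - (m - 4) * hs

theorem rep_1124_general (A B : ℤ) (hd : 0 ≤ 16 * A + 8 * B - B ^ 2)
    (h1 : ¬ (A % 2 = 1 ∧ B % 8 = 4)) (h2 : ¬ (A % 2 = 0 ∧ B % 8 = 0)) :
    ∃ x₁ x₂ x₃ x₄ : ℤ, ∀ m : ℤ,
      polygonal m x₁ + polygonal m x₂ + 2 * polygonal m x₃ + 4 * polygonal m x₄ =
        A * (m - 2) + B := by
  apply JointlyRepresented.exists_polygonal
  obtain hB | ⟨C, hC, rfl⟩ | ⟨C, rfl⟩ : Odd B ∨ (∃ C, Odd C ∧ B = 2 * C) ∨ 4 ∣ B := by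
    obtain hB | hB | hB : B % 2 = 1 ∨ B % 4 = 2 ∨ B % 4 = 0 := by lia
    · exact .inl (Int.odd_iff.mpr hB)
    · exact .inr (.inl ⟨B / 2, Int.odd_iff.mpr (by lia), by lia⟩)
    · exact .inr (.inr (Int.dvd_of_emod_eq_zero hB))
  · exact jointlyRepresented_of_odd hd hB
  · exact jointlyRepresented_two_mul_of_odd (by linarith) hC
  · exact jointlyRepresented_four_mul_of_odd_sub (by linarith) (Int.odd_iff.mpr (by lia))

theorem rep_1124 (m : ℤ) (hm : 3 ≤ m) (A B : ℤ) (hA : 0 ≤ A)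
    (hd : 0 ≤ 16 * A + 8 * B - B ^ 2)
    (h1 : ¬ (A % 2 = 1 ∧ B % 8 = 4))
    (h2 : ¬ (A % 2 = 0 ∧ B % 8 = 0)) :
    ∃ x₁ x₂ x₃ x₄ : ℤ,
      polygonal m x₁ + polygonal m x₂ + 2 * polygonal m x₃ + 4 * polygonal m x₄ =
        A * (m - 2) + B := by
  obtain ⟨x₁, x₂, x₃, x₄, h⟩ := rep_1124_general A B hd h1 h2
  exact ⟨x₁, x₂, x₃, x₄, h m⟩
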